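/- arXiv:2410.13759 — 5 statements merged into one kernel-verified Lean document; each statement's English description precedes it below -/
import Mathlib

section
/- Let N and M be positive integers with M ≤ N, and let θ = arcsin(√(M/N)) ∈ (0, π/2]. If m = ⌊π/(4θ)⌋, then sin²((2m+1)θ) ≥ 1 − M/N. -/
/-! With `m = ⌊π/(4θ)⌋` the angle `(2m+1)θ` lies within `θ ≤ π/2` of `π/2`. Since
`sin x = cos (x - π/2)` and cosine is even and decreasing on `[0, π]`, this gives
`sin ((2m+1)θ) ≥ cos θ ≥ 0`; squaring, `sin² ((2m+1)θ) ≥ 1 - sin² θ = 1 - M/N`. -/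

/-- **Grover's algorithm iteration count** (Fact 5.1). Let `N` and `M` be positive integers
with `M ≤ N`, and let `θ = arcsin (√(M/N))`. If `m = ⌊π/(4θ)⌋`, then after `m` Grover
iterations the success probability satisfies `sin²((2m+1)θ) ≥ 1 − M/N`. -/
theorem stmt0 (N M : ℕ) (hM : 0 < M) (hMN : M ≤ N)
    (θ : ℝ) (hθ : θ = Real.arcsin (Real.sqrt ((M : ℝ) / (N : ℝ))))
    (m : ℕ) (hm : m = ⌊Real.pi / (4 * θ)⌋₊) :
    1 - (M : ℝ) / (N : ℝ) ≤ Real.sin ((2 * (m : ℝ) + 1) * θ) ^ 2 := by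
  have hN : (0 : ℝ) < N := by exact_mod_cast hM.trans_le hMN
  have hq : (0 : ℝ) < (M : ℝ) / N := div_pos (by exact_mod_cast hM) hN
  have hq1 : (M : ℝ) / N ≤ 1 := (div_le_one hN).2 (by exact_mod_cast hMN)
  have hpos : 0 < θ := hθ ▸ Real.arcsin_pos.2 (Real.sqrt_pos.2 hq)
  have hle : θ ≤ Real.pi / 2 := hθ ▸ Real.arcsin_le_pi_div_two _
  have hsin : Real.sin θ ^ 2 = (M : ℝ) / N := by
    rw [hθ, Real.sin_arcsin (by linarith [Real.sqrt_nonneg ((M : ℝ) / N)])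
      (Real.sqrt_le_one.2 hq1), Real.sq_sqrt hq.le]
  have h1 : (m : ℝ) * (4 * θ) ≤ Real.pi := by
    rw [← le_div_iff₀ (by positivity), hm]
    exact Nat.floor_le (by positivity)
  have h2 : Real.pi < ((m : ℝ) + 1) * (4 * θ) := by
    rw [← div_lt_iff₀ (by positivity), hm]
    exact Nat.lt_floor_add_one _
  have habs : |(2 * (m : ℝ) + 1) * θ - Real.pi / 2| ≤ θ := by
    rw [abs_le]
    constructor <;> linarith
  have hcos : Real.cos θ ≤ Real.sin ((2 * (m : ℝ) + 1) * θ) := by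
    rw [← Real.cos_sub_pi_div_two, ← Real.cos_abs (_ - _)]
    exact Real.cos_le_cos_of_nonneg_of_le_pi (abs_nonneg _) (by linarith) habs
  have hcos0 : 0 ≤ Real.cos θ := Real.cos_nonneg_of_mem_Icc ⟨by linarith, hle⟩
  rw [← hsin, ← Real.cos_sq']
  exact pow_le_pow_left₀ hcos0 hcos 2
end

section
/- Define, for α ∈ (0, √3/2), f₁(α) = 4(1−α²)/(3−4α²) and g(α) = 16(1−α²)²/(3(3−4α²)). Then max(f₁(α), g(α)) ≥ 3/2 for every α ∈ (0, √3/2), with equality exactly at α = 1/2 (where f₁(1/2) = g(1/2) = 3/2). -/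
/-!
Put `x = α²`, so `0 < x < 3/4` and both denominators are positive. After clearing them,
`f₁ > 3/2` amounts to `4x - 1 > 0`, and `g > 3/2` amounts to `(4x - 1)(8x - 5) > 0`.
Hence `f₁ > 3/2` for `α > 1/2`, `g > 3/2` for `α < 1/2`, and both equal `3/2` at `α = 1/2`.
-/

/-- **Optimal filter parameter of classical NVSieve with spherical LSF**. For
`α ∈ (0, √3/2)` define `f₁(α) = 4(1−α²)/(3−4α²)` and `g(α) = 16(1−α²)²/(3(3−4α²))`.
Then `max(f₁(α), g(α)) ≥ 3/2`, with equality exactly at `α = 1/2`. -/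
theorem stmt12 (α : ℝ) (hα : α ∈ Set.Ioo (0:ℝ) (Real.sqrt 3 / 2)) :
    3 / 2 ≤ max (4 * (1 - α ^ 2) / (3 - 4 * α ^ 2))
        (16 * (1 - α ^ 2) ^ 2 / (3 * (3 - 4 * α ^ 2))) ∧
      (max (4 * (1 - α ^ 2) / (3 - 4 * α ^ 2))
          (16 * (1 - α ^ 2) ^ 2 / (3 * (3 - 4 * α ^ 2))) = 3 / 2 ↔ α = 1 / 2) := by
  obtain ⟨h0, h1⟩ := hα
  have hs : Real.sqrt 3 ^ 2 = 3 := Real.sq_sqrt (by norm_num)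
  have hd : 0 < 3 - 4 * α ^ 2 := by nlinarith
  -- Away from `1/2` it suffices that the maximum is strictly larger than `3/2`.
  have key : α ≠ 1 / 2 → 3 / 2 < max (4 * (1 - α ^ 2) / (3 - 4 * α ^ 2))
      (16 * (1 - α ^ 2) ^ 2 / (3 * (3 - 4 * α ^ 2))) := by
    intro hne
    rcases lt_or_gt_of_ne hne with h | h
    · have hx : α ^ 2 < 1 / 4 := by nlinarith
      refine lt_max_of_lt_right ?_
      rw [lt_div_iff₀ (by positivity)]
      nlinarith [mul_pos (show 0 < 1 - 4 * α ^ 2 by linarith)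
        (show 0 < 5 - 8 * α ^ 2 by linarith)]
    · have hx : 1 / 4 < α ^ 2 := by nlinarith
      refine lt_max_of_lt_left ?_
      rw [lt_div_iff₀ hd]
      linarith
  by_cases h : α = 1 / 2
  · subst h
    norm_num
  · exact ⟨(key h).le, fun e => absurd e (key h).ne', fun e => absurd e h⟩
end

section
/- Define, for α ∈ (0, √3/2), f₁(α) = 4(1−α²)/(3−4α²) and f₂(α) = 8(1−α²)/(3√(3−4α²)). Then max(f₁(α), f₂(α)) ≥ 13/9 for every α ∈ (0, √3/2), with equality exactly at α = √3/4 (where f₁(√3/4) = f₂(√3/4) = 13/9). -/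
/-!
Put `s = √(3 - 4α²) > 0`, so that `1 - α² = (1 + s²)/4`. The two terms become
`f₁ = (1 + s²)/s²` and `f₂ = 2(1 + s²)/(3s)`, which both equal `13/9` at `s = 3/2`.
For `s < 3/2` the decreasing function `f₁` exceeds `13/9`; for `s > 3/2` the factorization
`6(1 + s²) - 13s = (2s - 3)(3s - 2)` shows that `f₂` does. Finally `s = 3/2` means
`α² = 3/16`, that is `α = √3/4` as `α > 0`.
-/

/-- The strict lower bound away from the crossing point, in the variable `s = √(3 - 4α²)`. -/
lemma lt_max_of_ne {s : ℝ} (hs : 0 < s) (hne : s ≠ 3 / 2) :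
    13 / 9 < max ((1 + s ^ 2) / s ^ 2) (2 * (1 + s ^ 2) / (3 * s)) := by
  rcases lt_or_gt_of_ne hne with h | h
  · refine lt_max_of_lt_left ?_
    rw [div_lt_div_iff₀ (by norm_num) (by positivity)]
    nlinarith
  · refine lt_max_of_lt_right ?_
    rw [div_lt_div_iff₀ (by norm_num) (by positivity)]
    nlinarith [mul_pos (show 0 < 2 * s - 3 by linarith) (show 0 < 3 * s - 2 by linarith)]

/-- **Optimal filter parameter of quantum NVSieve with spherical LSF**. For
`α ∈ (0, √3/2)` define `f₁(α) = 4(1−α²)/(3−4α²)` and `f₂(α) = 8(1−α²)/(3√(3−4α²))`.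
Then `max(f₁(α), f₂(α)) ≥ 13/9`, with equality exactly at `α = √3/4`. -/
theorem stmt13 (α : ℝ) (hα : α ∈ Set.Ioo (0:ℝ) (Real.sqrt 3 / 2)) :
    13 / 9 ≤ max (4 * (1 - α ^ 2) / (3 - 4 * α ^ 2))
        (8 * (1 - α ^ 2) / (3 * Real.sqrt (3 - 4 * α ^ 2))) ∧
      (max (4 * (1 - α ^ 2) / (3 - 4 * α ^ 2))
          (8 * (1 - α ^ 2) / (3 * Real.sqrt (3 - 4 * α ^ 2))) = 13 / 9 ↔
        α = Real.sqrt 3 / 4) := by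
  obtain ⟨h0, h1⟩ := hα
  have h3 : Real.sqrt 3 ^ 2 = 3 := Real.sq_sqrt (by norm_num)
  have hpos : 0 < 3 - 4 * α ^ 2 := by nlinarith
  have hs : 0 < Real.sqrt (3 - 4 * α ^ 2) := Real.sqrt_pos.mpr hpos
  have hsq : Real.sqrt (3 - 4 * α ^ 2) ^ 2 = 3 - 4 * α ^ 2 := Real.sq_sqrt hpos.le
  generalize Real.sqrt (3 - 4 * α ^ 2) = s at hs hsq ⊢
  have e1 : 4 * (1 - α ^ 2) = 1 + s ^ 2 := by linarith
  have e2 : 8 * (1 - α ^ 2) = 2 * (1 + s ^ 2) := by linarith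
  have hiff : s = 3 / 2 ↔ α = Real.sqrt 3 / 4 := by
    rw [← sq_eq_sq₀ hs.le (by norm_num), ← sq_eq_sq₀ h0.le (by positivity), div_pow √3, h3, hsq]
    constructor <;> intro h <;> linarith
  rw [e1, e2, ← hsq, ← hiff]
  by_cases h : s = 3 / 2
  · subst h
    norm_num
  · have hlt := lt_max_of_ne hs h
    exact ⟨hlt.le, fun he => absurd he hlt.ne', fun he => absurd he h⟩
end

section
/- Let D ≥ 2 be an integer, let v, w ∈ S^{D−1} be unit vectors, and let θ = arccos⟨v,w⟩. Then σ({a ∈ S^{D−1} : (⟨a,v⟩ ≥ 0) ↔ (⟨a,w⟩ ≥ 0)}) = 1 − θ/π. -/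
/-!
The measure of `{a | 0 ≤ ⟪a, v⟫ ↔ 0 ≤ ⟪a, w⟫}` depends on the pair of unit vectors `(v, w)` only
through `⟪v, w⟫`, because a product of two reflections carries any such pair to any other with the
same inner product (`exists_isometry_pair`). Hence it does not change if `(v, w)` is replaced by
`(e s, e (s + θ))`, where `e s = cos s • e₀ + sin s • e₁` runs through a fixed great circle.
Averaging over `s` in a full period and exchanging the integrals (Tonelli), it is enough to know,
for almost every `a`, the length of the set of `s` for which `⟪a, e s⟫` and `⟪a, e (s + θ)⟫` have
the same sign. If `a` has nonzero projection to the plane of `e₀, e₁`, then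
`⟪a, e s⟫ = r cos (s - α)` with `r > 0`, and that length is `2π - 2θ` (`volume_agree`).

The remaining `a` lie in a hyperplane, and hyperplanes are null (`hyperplane_null`): they all have
the same measure by invariance, and averaging over the hyperplanes orthogonal to the points
`(1, t, …, t^(D-1))` of the moment curve, a given `a ≠ 0` lies in finitely many of them only, since
`∑ aᵢ tⁱ` is a nonzero polynomial in `t`.
-/

open MeasureTheory Set
open scoped RealInnerProductSpace

/-- Two pairs of vectors with equal norms and equal inner product are related by a linear isometry:
reflect `v` to `v'`, and then the image of `w` to `w'` by a reflection fixing `v'`. -/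
lemma exists_isometry_pair {E : Type*} [NormedAddCommGroup E] [InnerProductSpace ℝ E]
    {v w v' w' : E} (hv : ‖v‖ = ‖v'‖) (hw : ‖w‖ = ‖w'‖)
    (h : ⟪v, w⟫ = ⟪v', w'⟫) : ∃ O : E ≃ₗᵢ[ℝ] E, O v = v' ∧ O w = w' := by
  set R := (ℝ ∙ (v - v'))ᗮ.reflection with hR
  have h1 : R v = v' := Submodule.reflection_sub hv
  set S := (ℝ ∙ (R w - w'))ᗮ.reflection with hS
  have h2 : S (R w) = w' := Submodule.reflection_sub (by rw [R.norm_map, hw])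
  have h3 : S v' = v' := by
    apply Submodule.reflection_mem_subspace_eq_self
    rw [Submodule.mem_orthogonal_singleton_iff_inner_left, inner_sub_right, ← h, ← h1,
      R.inner_map_map, sub_self]
  exact ⟨R.trans S, by simp [h1, h3], by simp [h2]⟩

/-- In a full period, the set of `s` for which `cos (s - α)` and `cos (s + θ - α)` have the same
sign is, up to finitely many points, a union of two intervals of length `π - θ`. -/
lemma volume_agree (α θ : ℝ) (h0 : 0 ≤ θ) (hπ : θ ≤ Real.pi) :
    volume ({s : ℝ | 0 ≤ Real.cos (s - α) ↔ 0 ≤ Real.cos (s + θ - α)} ∩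
      Ioc 0 (0 + 2 * Real.pi)) = ENNReal.ofReal (2 * Real.pi - 2 * θ) := by
  have hpp := Real.pi_pos
  set A := {s : ℝ | 0 ≤ Real.cos (s - α) ↔ 0 ≤ Real.cos (s + θ - α)} with hA
  have hmeas : MeasurableSet A := by
    apply MeasurableSet.iff <;> exact measurableSet_le (by fun_prop) (by fun_prop)
  -- By periodicity the window may start at `α - π/2`, where `cos (s - α)` becomes nonnegative.
  have hshift := (isAddFundamentalDomain_Ioc (show 0 < 2 * Real.pi by positivity) 0
    volume).measure_set_eq (isAddFundamentalDomain_Ioc (show 0 < 2 * Real.pi by positivity)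
    (α - Real.pi / 2) volume) hmeas (by
      rintro ⟨g, hg⟩
      obtain ⟨n, rfl⟩ := AddSubgroup.mem_zmultiples_iff.mp hg
      ext x
      simp only [hA, mem_preimage, mem_ofPred_eq, AddSubgroup.mk_vadd, vadd_eq_add, zsmul_eq_mul]
      rw [show n * (2 * Real.pi) + x - α = (x - α) + n * (2 * Real.pi) by ring,
        show n * (2 * Real.pi) + x + θ - α = (x + θ - α) + n * (2 * Real.pi) by ring,
        Real.cos_add_int_mul_two_pi, Real.cos_add_int_mul_two_pi])
  rw [hshift]
  have hae : (A ∩ Ioc (α - Real.pi / 2) (α - Real.pi / 2 + 2 * Real.pi) : Set ℝ) =ᵐ[volume]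
      (Ioc (α - Real.pi / 2) (α + Real.pi / 2 - θ) ∪
        Ioo (α + Real.pi / 2) (α + 3 * Real.pi / 2 - θ) : Set ℝ) := by
    have e1 : ∀ᵐ s : ℝ, s ≠ α + Real.pi / 2 := by simp [ae_iff]
    have e2 : ∀ᵐ s : ℝ, s ≠ α + 3 * Real.pi / 2 := by simp [ae_iff]
    filter_upwards [e1, e2] with s hs1 hs2
    apply propext
    change (s ∈ A ∧ s ∈ Ioc _ _) ↔ (s ∈ Ioc _ _ ∨ s ∈ Ioo _ _)
    have cpos : ∀ x : ℝ, -(Real.pi / 2) ≤ x → x ≤ Real.pi / 2 → 0 ≤ Real.cos x :=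
      fun x h h' => Real.cos_nonneg_of_neg_pi_div_two_le_of_le h h'
    have cneg : ∀ x : ℝ, Real.pi / 2 < x → x < 3 * Real.pi / 2 → ¬ 0 ≤ Real.cos x :=
      fun x h h' => not_le.mpr (Real.cos_neg_of_pi_div_two_lt_of_lt h (by linarith))
    have cpos' : ∀ x : ℝ, 3 * Real.pi / 2 ≤ x → x ≤ 5 * Real.pi / 2 → 0 ≤ Real.cos x := by
      intro x h h'
      rw [← Real.cos_sub_two_pi]
      exact cpos _ (by linarith) (by linarith)
    simp only [hA, mem_ofPred_eq, mem_Ioc, mem_Ioo]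
    constructor
    · rintro ⟨hiff, hl, hr⟩
      rcases lt_or_gt_of_ne hs1 with h | h
      · left
        refine ⟨hl, ?_⟩
        by_contra hc
        exact cneg (s + θ - α) (by linarith) (by linarith)
          (hiff.1 (cpos _ (by linarith) (by linarith)))
      · right
        refine ⟨h, ?_⟩
        by_contra hc
        have hr' : s < α + 3 * Real.pi / 2 := lt_of_le_of_ne (by linarith) hs2
        exact cneg (s - α) (by linarith) (by linarith)
          (hiff.2 (cpos' _ (by linarith) (by linarith)))
    · rintro (⟨h1, h2⟩ | ⟨h1, h2⟩)
      · exact ⟨iff_of_true (cpos _ (by linarith) (by linarith))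
          (cpos _ (by linarith) (by linarith)), by linarith, by linarith⟩
      · exact ⟨iff_of_false (cneg _ (by linarith) (by linarith))
          (cneg _ (by linarith) (by linarith)), by linarith, by linarith⟩
  rw [measure_congr hae, measure_union _ measurableSet_Ioo, Real.volume_Ioc, Real.volume_Ioo,
    ← ENNReal.ofReal_add (by linarith) (by linarith)]
  · congr 1; ring
  · rw [Set.disjoint_left]
    rintro x ⟨_, hx⟩ ⟨hx', _⟩
    linarith

/-- An orthogonally invariant probability measure on the sphere gives measure zero to the
intersection with any hyperplane. The invariance is used in the form `hinv`. -/
lemma hyperplane_null (D : ℕ)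
    (σ : Measure (Metric.sphere (0 : EuclideanSpace ℝ (Fin D)) 1)) [IsProbabilityMeasure σ]
    (hinv : ∀ u u' : EuclideanSpace ℝ (Fin D), ‖u‖ = ‖u'‖ →
      σ {a | ⟪(a : EuclideanSpace ℝ (Fin D)), u⟫ = 0} =
        σ {a | ⟪(a : EuclideanSpace ℝ (Fin D)), u'⟫ = 0})
    (u : EuclideanSpace ℝ (Fin D)) (hu : u ≠ 0) :
    σ {a | ⟪(a : EuclideanSpace ℝ (Fin D)), u⟫ = 0} = 0 := by
  have hun : ‖u‖ ≠ 0 := norm_ne_zero_iff.mpr hu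
  have hD : 0 < D := by
    rcases Nat.eq_zero_or_pos D with rfl | h
    · exact absurd (Subsingleton.elim u 0) hu
    · exact h
  let m : ℝ → EuclideanSpace ℝ (Fin D) := fun t => WithLp.toLp 2 (fun i => t ^ (i : ℕ))
  have hmc : Continuous m := by
    apply (PiLp.continuous_toLp 2 _).comp
    fun_prop
  have hm0 : ∀ t, m t ≠ 0 := by
    intro t h
    have := congrArg (fun x : EuclideanSpace ℝ (Fin D) => x ⟨0, hD⟩) h
    simp [m] at this
  have hconst : ∀ t, σ {a | ⟪(a : EuclideanSpace ℝ (Fin D)), m t⟫ = 0} =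
      σ {a | ⟪(a : EuclideanSpace ℝ (Fin D)), u⟫ = 0} := by
    intro t
    have hmt : ‖m t‖ ≠ 0 := norm_ne_zero_iff.mpr (hm0 t)
    rw [← hinv ((‖u‖ / ‖m t‖) • m t) u (by
      rw [norm_smul, Real.norm_of_nonneg (by positivity), div_mul_cancel₀ _ hmt])]
    congr 1
    ext a
    simp [inner_smul_right, hun, hmt]
  let T : Set (ℝ × Metric.sphere (0 : EuclideanSpace ℝ (Fin D)) 1) :=
    {p | ⟪(p.2 : EuclideanSpace ℝ (Fin D)), m p.1⟫ = 0}
  have hT : MeasurableSet T := by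
    apply IsClosed.measurableSet
    exact isClosed_eq (by fun_prop) continuous_const
  let l : Measure ℝ := volume.restrict (Ioc 0 1)
  have hz : (l.prod σ) T = 0 := by
    rw [Measure.prod_apply_symm hT, lintegral_eq_zero_iff (measurable_measure_prodMk_right hT)]
    refine Filter.Eventually.of_forall fun a => ?_
    refine (Measure.absolutelyContinuous_of_le Measure.restrict_le_self) ?_
    apply Set.Finite.measure_zero
    -- The parameters `t` at which `a ⊥ m t` are the roots of a nonzero polynomial.
    let p : Polynomial ℝ := ∑ i : Fin D, Polynomial.monomial (i : ℕ) (a.1 i)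
    have hp : p ≠ 0 := by
      intro h
      have ha : (a.1 : EuclideanSpace ℝ (Fin D)) = 0 := by
        ext i
        have := congrArg (fun q => Polynomial.coeff q (i : ℕ)) h
        simpa [p, Polynomial.finsetSum_coeff, Polynomial.coeff_monomial, Fin.val_inj] using this
      have := mem_sphere_zero_iff_norm.mp a.2
      rw [ha] at this
      simp at this
    refine (Polynomial.finite_setOfPred_isRoot hp).subset ?_
    intro t ht
    have ht' : ⟪(a : EuclideanSpace ℝ (Fin D)), m t⟫ = 0 := ht
    simp only [mem_ofPred_eq, Polynomial.IsRoot.def, p, Polynomial.eval_finsetSum,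
      Polynomial.eval_monomial]
    rw [← ht', PiLp.inner_apply]
    exact Finset.sum_congr rfl fun i _ => by simp [m, mul_comm]
  rw [Measure.prod_apply hT] at hz
  have : ∀ t, σ (Prod.mk t ⁻¹' T) = σ {a | ⟪(a : EuclideanSpace ℝ (Fin D)), u⟫ = 0} := hconst
  simpa [this, l] using hz

/-- **Charikar's collision probability for angular LSH**. Let `D ≥ 2`, let `v, w` be unit
vectors in `ℝ^D` at angle `θ = arccos ⟨v,w⟩`, and let `σ` be the uniform
(rotation-invariant) Borel probability measure on the unit sphere. Then
`σ({a : (⟨a,v⟩ ≥ 0) ↔ (⟨a,w⟩ ≥ 0)}) = 1 − θ/π`. -/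
theorem stmt18 (D : ℕ) (hD : 2 ≤ D)
    (v w : EuclideanSpace ℝ (Fin D)) (hv : ‖v‖ = 1) (hw : ‖w‖ = 1)
    (σ : MeasureTheory.Measure (Metric.sphere (0 : EuclideanSpace ℝ (Fin D)) 1))
    [MeasureTheory.IsProbabilityMeasure σ]
    (hσinv : ∀ O : EuclideanSpace ℝ (Fin D) ≃ₗᵢ[ℝ] EuclideanSpace ℝ (Fin D),
      MeasureTheory.Measure.map
        (fun x : Metric.sphere (0 : EuclideanSpace ℝ (Fin D)) 1 =>
          (⟨O x.1, by
            have h : ‖(x : EuclideanSpace ℝ (Fin D))‖ = 1 := mem_sphere_zero_iff_norm.mp x.2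
            exact mem_sphere_zero_iff_norm.mpr (by rw [O.norm_map]; exact h)⟩ :
            Metric.sphere (0 : EuclideanSpace ℝ (Fin D)) 1)) σ = σ)
    (θ : ℝ) (hθ : θ = Real.arccos ⟪v, w⟫) :
    σ {a : (Metric.sphere (0 : EuclideanSpace ℝ (Fin D)) 1) |
        (0 ≤ ⟪(a : EuclideanSpace ℝ (Fin D)), v⟫ ↔ 0 ≤ ⟪(a : EuclideanSpace ℝ (Fin D)), w⟫)} =
      ENNReal.ofReal (1 - θ / Real.pi) := by
  have hpp := Real.pi_pos
  have hθ0 : 0 ≤ θ := hθ ▸ Real.arccos_nonneg _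
  have hθπ : θ ≤ Real.pi := hθ ▸ Real.arccos_le_pi _
  have hcos : Real.cos θ = ⟪v, w⟫ := by
    have := abs_le.mp (abs_real_inner_le_norm v w)
    rw [hv, hw] at this
    rw [hθ, Real.cos_arccos (by linarith) (by linarith)]
  have hOmeas : ∀ O : EuclideanSpace ℝ (Fin D) ≃ₗᵢ[ℝ] EuclideanSpace ℝ (Fin D),
      Measurable (fun x : Metric.sphere (0 : EuclideanSpace ℝ (Fin D)) 1 =>
        (⟨O x.1, mem_sphere_zero_iff_norm.mpr
          ((O.norm_map _).trans (mem_sphere_zero_iff_norm.mp x.2))⟩ :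
            Metric.sphere (0 : EuclideanSpace ℝ (Fin D)) 1)) := fun O =>
    ((O.continuous.comp continuous_subtype_val).subtype_mk _).measurable
  have hinv1 : ∀ u u' : EuclideanSpace ℝ (Fin D), ‖u‖ = ‖u'‖ →
      σ {a | ⟪(a : EuclideanSpace ℝ (Fin D)), u⟫ = 0} =
        σ {a | ⟪(a : EuclideanSpace ℝ (Fin D)), u'⟫ = 0} := by
    intro u u' h
    obtain ⟨O, hO, -⟩ := exists_isometry_pair h h (by simp [h])
    conv_rhs => rw [← hσinv O]
    rw [Measure.map_apply (hOmeas O)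
      (isClosed_eq (by fun_prop) continuous_const).measurableSet]
    congr 1
    ext a
    simp [← hO, O.inner_map_map]
  have hmeasA : ∀ u u' : EuclideanSpace ℝ (Fin D), MeasurableSet
      {a : Metric.sphere (0 : EuclideanSpace ℝ (Fin D)) 1 |
        (0 ≤ ⟪(a : EuclideanSpace ℝ (Fin D)), u⟫ ↔ 0 ≤ ⟪(a : EuclideanSpace ℝ (Fin D)), u'⟫)} := by
    intro u u'
    apply MeasurableSet.iff <;>
      exact (isClosed_le continuous_const (by fun_prop)).measurableSet
  let i0 : Fin D := ⟨0, by omega⟩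
  let i1 : Fin D := ⟨1, by omega⟩
  have hi : i0 ≠ i1 := by simp [i0, i1]
  let e : ℝ → EuclideanSpace ℝ (Fin D) := fun s =>
    Real.cos s • EuclideanSpace.single i0 1 + Real.sin s • EuclideanSpace.single i1 1
  have hec : Continuous e := by fun_prop
  have hee : ∀ s t, ⟪e s, e t⟫ = Real.cos (s - t) := by
    intro s t
    simp [e, inner_add_left, inner_add_right, inner_smul_left, inner_smul_right,
      EuclideanSpace.inner_single_left, hi, hi.symm, Real.cos_sub]
    ring
  have hen : ∀ s, ‖e s‖ = 1 := by
    intro s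
    have := real_inner_self_eq_norm_sq (e s)
    rw [hee, sub_self, Real.cos_zero] at this
    nlinarith [norm_nonneg (e s)]
  have hae : ∀ (a : EuclideanSpace ℝ (Fin D)) s,
      ⟪a, e s⟫ = a i0 * Real.cos s + a i1 * Real.sin s := by
    intro a s
    simp [e, inner_add_right, inner_smul_right, EuclideanSpace.inner_single_right, mul_comm]
  have hconst : ∀ s, σ {a | (0 ≤ ⟪(a : EuclideanSpace ℝ (Fin D)), e s⟫ ↔
      0 ≤ ⟪(a : EuclideanSpace ℝ (Fin D)), e (s + θ)⟫)} =
      σ {a | (0 ≤ ⟪(a : EuclideanSpace ℝ (Fin D)), v⟫ ↔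
        0 ≤ ⟪(a : EuclideanSpace ℝ (Fin D)), w⟫)} := by
    intro s
    obtain ⟨O, hO, hO'⟩ := exists_isometry_pair (v := v) (w := w) (v' := e s) (w' := e (s + θ))
      (by rw [hv, hen]) (by rw [hw, hen]) (by
        rw [hee, ← hcos, show s - (s + θ) = -θ by ring, Real.cos_neg])
    conv_lhs => rw [← hσinv O]
    rw [Measure.map_apply (hOmeas O) (hmeasA _ _)]
    congr 1
    ext a
    simp [← hO, ← hO', O.inner_map_map]
  let T : Set (ℝ × Metric.sphere (0 : EuclideanSpace ℝ (Fin D)) 1) :=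
    {p | 0 ≤ ⟪(p.2 : EuclideanSpace ℝ (Fin D)), e p.1⟫ ↔
      0 ≤ ⟪(p.2 : EuclideanSpace ℝ (Fin D)), e (p.1 + θ)⟫}
  have hT : MeasurableSet T := by
    apply MeasurableSet.iff <;>
      exact (isClosed_le continuous_const (by fun_prop)).measurableSet
  let l : Measure ℝ := volume.restrict (Ioc 0 (0 + 2 * Real.pi))
  have hL : (l.prod σ) T = σ {a : Metric.sphere (0 : EuclideanSpace ℝ (Fin D)) 1 |
      (0 ≤ ⟪(a : EuclideanSpace ℝ (Fin D)), v⟫ ↔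
        0 ≤ ⟪(a : EuclideanSpace ℝ (Fin D)), w⟫)} * ENNReal.ofReal (2 * Real.pi) := by
    rw [Measure.prod_apply hT]
    have : ∀ s, σ (Prod.mk s ⁻¹' T) = _ := hconst
    simp [this, l]
  have hnull : ∀ᵐ a ∂σ, a.1 i0 ≠ 0 := by
    have := hyperplane_null D σ hinv1 (EuclideanSpace.single i0 1) (by simp)
    simpa [ae_iff, EuclideanSpace.inner_single_right] using this
  have hR : (l.prod σ) T = ENNReal.ofReal (2 * Real.pi - 2 * θ) := by
    rw [Measure.prod_apply_symm hT]
    have : ∀ᵐ a ∂σ, l ((fun s => (s, a)) ⁻¹' T) = ENNReal.ofReal (2 * Real.pi - 2 * θ) := by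
      filter_upwards [hnull] with a ha
      -- `z` is the projection of `a` to the plane of `e₀, e₁`; `‖z‖` and `z.arg` are its polar
      -- coordinates.
      let z : ℂ := ⟨a.1 i0, a.1 i1⟩
      have hz : z ≠ 0 := fun h => ha (congrArg Complex.re h)
      have hr : 0 < ‖z‖ := norm_pos_iff.mpr hz
      have hpol : ∀ s, ⟪(a : EuclideanSpace ℝ (Fin D)), e s⟫ =
          ‖z‖ * Real.cos (s - z.arg) := by
        intro s
        have h0 : a.1 i0 = ‖z‖ * Real.cos z.arg := (Complex.norm_mul_cos_arg z).symm
        have h1 : a.1 i1 = ‖z‖ * Real.sin z.arg := (Complex.norm_mul_sin_arg z).symm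
        rw [hae, h0, h1, Real.cos_sub]
        ring
      rw [Measure.restrict_apply (measurable_prodMk_right hT), ← volume_agree z.arg θ hθ0 hθπ]
      congr 2
      ext s
      simp only [T, mem_preimage, mem_ofPred_eq, hpol, mul_nonneg_iff_of_pos_left hr]
    rw [lintegral_congr_ae this]
    simp
  rw [hL] at hR
  have h2π : ENNReal.ofReal (2 * Real.pi) ≠ 0 := by
    rw [Ne, ENNReal.ofReal_eq_zero]; linarith
  rw [← ENNReal.mul_left_inj h2π ENNReal.ofReal_ne_top, hR,
    ← ENNReal.ofReal_mul (by rw [sub_nonneg, div_le_one hpp]; exact hθπ)]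
  congr 1
  field_simp
end

section
/- Let ε ∈ (0,1) and let t be a real number with t ≥ ln(1/ε), and set k = (ln t − ln ln(1/ε)) / ln(3/2), so that k ≥ 0 and (2/3)^k = ln(1/ε)/t. Then for every θ ∈ [0, π/3], (1 − (1 − θ/π)^k)^t ≤ ε; equivalently, the collision probability 1 − (1 − (1 − θ/π)^k)^t of two vectors at angle θ ≤ π/3 in at least one of t hash tables, each built from a k-fold AND-composition of angular hash functions with single-function collision probability 1 − θ/π, is at least 1 − ε. -/
/-!
With `L = log (1 / ε)`, the choice of `k` gives `(2/3)^k = L / t`. Since `θ ≤ π / 3` means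
`1 - θ / π ≥ 2/3` and `k ≥ 0`, the AND-composed collision probability is at least `L / t`, so
`1 - x ≤ exp (-x)` bounds the failure probability by `exp (-L / t) ^ t = exp (-L) = ε`.
-/

/-- **Nearby vectors collide in at least one angular-LSH table**. Let `ε ∈ (0,1)` and let
`t ≥ ln(1/ε)` be real, and set `k = (ln t − ln ln(1/ε)) / ln(3/2)` (so that `k ≥ 0` and
`(2/3)^k = ln(1/ε)/t`). Then for every `θ ∈ [0, π/3]`, `(1 − (1 − θ/π)^k)^t ≤ ε`;
equivalently, the collision probability `1 − (1 − (1 − θ/π)^k)^t` in at least one of `t`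
hash tables, each a `k`-fold AND-composition of angular hashes, is at least `1 − ε`. -/
theorem stmt19 (ε : ℝ) (hε : ε ∈ Set.Ioo (0:ℝ) 1) (t : ℝ) (ht : Real.log (1 / ε) ≤ t)
    (k : ℝ) (hk : k = (Real.log t - Real.log (Real.log (1 / ε))) / Real.log (3 / 2)) :
    ∀ θ ∈ Set.Icc (0:ℝ) (Real.pi / 3),
      (1 - (1 - θ / Real.pi) ^ k) ^ t ≤ ε ∧
        1 - ε ≤ 1 - (1 - (1 - θ / Real.pi) ^ k) ^ t := by
  obtain ⟨hε0, hε1⟩ := hε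
  rintro θ ⟨hθ0, hθ1⟩
  have hpi := Real.pi_pos
  set L := Real.log (1 / ε) with hL
  have hL0 : 0 < L := Real.log_pos (by rw [lt_div_iff₀ hε0]; linarith)
  have ht0 : 0 < t := hL0.trans_le ht
  have hlog : 0 < Real.log (3 / 2) := Real.log_pos (by norm_num)
  have hk0 : 0 ≤ k := by
    rw [hk]
    exact div_nonneg (sub_nonneg.2 (Real.log_le_log hL0 ht)) hlog.le
  have hkey : (2 / 3 : ℝ) ^ k = L / t := by
    have h23 : Real.log (2 / 3) = -Real.log (3 / 2) := by
      rw [← Real.log_inv]; norm_num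
    have hkm : k * Real.log (3 / 2) = Real.log t - Real.log L := by
      rw [hk]; field_simp
    rw [Real.rpow_def_of_pos (by norm_num), h23,
      show -Real.log (3 / 2) * k = Real.log L - Real.log t by linarith,
      ← Real.log_div hL0.ne' ht0.ne', Real.exp_log (by positivity)]
  have hp1 : 1 - θ / Real.pi ≤ 1 := by
    have : 0 ≤ θ / Real.pi := by positivity
    linarith
  have hp2 : 2 / 3 ≤ 1 - θ / Real.pi := by
    have : θ / Real.pi ≤ 1 / 3 := by
      rw [div_le_iff₀ hpi]; linarith
    linarith
  have hb1 : (1 - θ / Real.pi) ^ k ≤ 1 := Real.rpow_le_one (by linarith) hp1 hk0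
  have hb2 : L / t ≤ (1 - θ / Real.pi) ^ k := by
    rw [← hkey]
    exact Real.rpow_le_rpow (by norm_num) hp2 hk0
  have hmain : (1 - (1 - θ / Real.pi) ^ k) ^ t ≤ ε := by
    calc (1 - (1 - θ / Real.pi) ^ k) ^ t
        ≤ Real.exp (-(L / t)) ^ t := by
          refine Real.rpow_le_rpow (by linarith) ?_ ht0.le
          linarith [Real.add_one_le_exp (-(L / t))]
      _ = Real.exp (-L) := by
          rw [← Real.exp_mul]; congr 1; field_simp
      _ = ε := by
          rw [hL, one_div, Real.log_inv, neg_neg, Real.exp_log hε0]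
  exact ⟨hmain, by linarith⟩
end
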